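/- arXiv:2102.01160 — 2 statements merged into one kernel-verified Lean document; each statement's English description precedes it below -/
import Mathlib

section
/- Let T be a nonnegative integrable random variable on a probability space, and let ϖ > 0 and ILR > 0. Then the ergodic capacity satisfies E[log(1 + ϖ·T/(ILR·T + 1))] ≤ log(1 + ϖ·𝒥/(ILR·𝒥 + 1)), where 𝒥 = E[T]. -/
open MeasureTheory

/-- Jensen bound on the ergodic capacity: for a nonnegative integrable random
variable T, ϖ > 0 and ILR > 0,
E[log(1 + ϖ·T/(ILR·T + 1))] ≤ log(1 + ϖ·𝒥/(ILR·𝒥 + 1)) with 𝒥 = E[T]. -/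
theorem ergodic_capacity_jensen_bound {Ω : Type*} [MeasurableSpace Ω]
    (μ : Measure Ω) [IsProbabilityMeasure μ]
    (T : Ω → ℝ) (hTnn : ∀ᵐ ω ∂μ, 0 ≤ T ω) (hTint : Integrable T μ)
    (ϖ ILR : ℝ) (hϖ : 0 < ϖ) (hILR : 0 < ILR) :
    ∫ ω, Real.log (1 + ϖ * (T ω / (ILR * T ω + 1))) ∂μ ≤
      Real.log (1 + ϖ * ((∫ ω, T ω ∂μ) / (ILR * (∫ ω, T ω ∂μ) + 1))) := by
  set J := ∫ ω, T ω ∂μ with hJ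
  have hJ0 : 0 ≤ J := integral_nonneg_of_ae hTnn
  have hb : 0 < ILR * J + 1 := by positivity
  have hy : 0 < 1 + ϖ * (J / (ILR * J + 1)) := by positivity
  set y := 1 + ϖ * (J / (ILR * J + 1)) with hydef
  set c := ϖ / (ILR * J + 1) ^ 2 / y with hc
  have key : ∀ t : ℝ, 0 ≤ t →
      Real.log (1 + ϖ * (t / (ILR * t + 1))) ≤ Real.log y + c * (t - J) := by
    intro t ht
    have ha : 0 < ILR * t + 1 := by positivity
    have hx : 0 < 1 + ϖ * (t / (ILR * t + 1)) := by positivity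
    have h1 := Real.log_le_sub_one_of_pos (div_pos hx hy)
    rw [Real.log_div hx.ne' hy.ne'] at h1
    have h2 : 1 + ϖ * (t / (ILR * t + 1)) ≤ y + ϖ / (ILR * J + 1) ^ 2 * (t - J) := by
      have : y + ϖ / (ILR * J + 1) ^ 2 * (t - J) - (1 + ϖ * (t / (ILR * t + 1)))
          = ϖ * ILR * (t - J) ^ 2 / ((ILR * J + 1) ^ 2 * (ILR * t + 1)) := by
        rw [hydef]; field_simp; ring
      have h3 : 0 ≤ ϖ * ILR * (t - J) ^ 2 / ((ILR * J + 1) ^ 2 * (ILR * t + 1)) := by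
        positivity
      linarith
    have h4 : (1 + ϖ * (t / (ILR * t + 1))) / y ≤ 1 + c * (t - J) := by
      rw [div_le_iff₀ hy]
      have : (1 + c * (t - J)) * y = y + ϖ / (ILR * J + 1) ^ 2 * (t - J) := by
        rw [hc]; clear_value y; field_simp
      linarith
    linarith
  have hi : Integrable (fun ω => c * (T ω - J)) μ :=
    (hTint.sub (integrable_const J)).const_mul c
  calc ∫ ω, Real.log (1 + ϖ * (T ω / (ILR * T ω + 1))) ∂μ
      ≤ ∫ ω, (Real.log y + c * (T ω - J)) ∂μ := by
        apply integral_mono_of_nonneg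
        · filter_upwards [hTnn] with ω h
          apply Real.log_nonneg
          have : 0 ≤ ϖ * (T ω / (ILR * T ω + 1)) := by positivity
          linarith
        · exact (integrable_const _).add hi
        · filter_upwards [hTnn] with ω h
          exact key _ h
    _ = Real.log y := by
        rw [integral_add (integrable_const _) hi, integral_const_mul,
          integral_sub hTint (integrable_const J)]
        simp [← hJ]
end

section
/- Let N and m be natural numbers with 1 ≤ m ≤ N. Then for every real p, Σ_{k=m}^{N} C(N,k)·p^k·(1−p)^{N−k} = 1 − m·C(N,m)·Σ_{n=0}^{m−1} C(m−1,n)·(−1)^n·(1−p)^{N−m+n+1} / (N−m+n+1). -/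
open Polynomial in
lemma osb_tail_deriv (M d : ℕ) :
    Polynomial.derivative (∑ k ∈ Finset.range (d + 1), bernsteinPolynomial ℝ (M + d + 1) (M + k + 1)) =
      ((M + d + 1 : ℕ) : ℝ[X]) * bernsteinPolynomial ℝ (M + d) M := by
  rw [Polynomial.derivative_sum]
  have h : ∀ k ∈ Finset.range (d + 1),
      Polynomial.derivative (bernsteinPolynomial ℝ (M + d + 1) (M + k + 1)) =
      ((M + d + 1 : ℕ) : ℝ[X]) * bernsteinPolynomial ℝ (M + d) (M + k) -
      ((M + d + 1 : ℕ) : ℝ[X]) * bernsteinPolynomial ℝ (M + d) (M + (k + 1)) := by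
    intro k _
    rw [bernsteinPolynomial.derivative_succ, mul_sub]
    rfl
  rw [Finset.sum_congr rfl h, Finset.sum_range_sub' (fun k => ((M + d + 1 : ℕ) : ℝ[X]) * bernsteinPolynomial ℝ (M + d) (M + k))]
  rw [bernsteinPolynomial.eq_zero_of_lt ℝ (show M + d < M + (d + 1) by omega)]
  simp

lemma osb_aux (M d : ℕ) (p : ℝ) :
    (∑ k ∈ Finset.range (d + 1), bernsteinPolynomial ℝ (M + d + 1) (M + k + 1)).eval p =
      1 - ((M + 1 : ℕ) : ℝ) * ((M + d + 1).choose (M + 1) : ℝ) *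
        ∑ n ∈ Finset.range (M + 1), (M.choose n : ℝ) * (-1 : ℝ) ^ n *
          (1 - p) ^ (d + n + 1) / ((d : ℝ) + n + 1) := by
  set c : ℝ := ((M + 1 : ℕ) : ℝ) * ((M + d + 1).choose (M + 1) : ℝ) with hc
  have hc2 : c = ((M + d + 1 : ℕ) : ℝ) * ((M + d).choose M : ℝ) := by
    rw [hc, mul_comm]
    exact_mod_cast (Nat.add_one_mul_choose_eq (M + d) M).symm
  set P := ∑ k ∈ Finset.range (d + 1), bernsteinPolynomial ℝ (M + d + 1) (M + k + 1) with hP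
  let G : ℝ → ℝ := fun x => P.eval x + c * ∑ n ∈ Finset.range (M + 1), (M.choose n : ℝ) * (-1 : ℝ) ^ n *
          (1 - x) ^ (d + n + 1) / ((d : ℝ) + n + 1)
  have hG : ∀ x, HasDerivAt G 0 x := by
    intro x
    have h1 : ∀ n ∈ Finset.range (M + 1), HasDerivAt (fun x : ℝ => (M.choose n : ℝ) * (-1 : ℝ) ^ n *
          (1 - x) ^ (d + n + 1) / ((d : ℝ) + n + 1)) (-((1 - x) ^ d * ((-(1 - x)) ^ n * 1 ^ (M - n) * (M.choose n : ℝ)))) x := by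
      intro n _
      have h := ((((hasDerivAt_id x).const_sub 1).pow (d + n + 1)).const_mul
        ((M.choose n : ℝ) * (-1 : ℝ) ^ n)).div_const ((d : ℝ) + n + 1)
      refine h.congr_deriv ?_
      have : (d : ℝ) + n + 1 ≠ 0 := by positivity
      rw [neg_pow (1 - x) n]
      simp only [id, Nat.add_sub_cancel, one_pow]
      push_cast
      field_simp
      ring
    have h2 := (P.hasDerivAt x).add ((HasDerivAt.fun_sum h1).const_mul c)
    refine h2.congr_deriv ?_
    rw [Finset.sum_neg_distrib, ← Finset.mul_sum, ← add_pow, hP, osb_tail_deriv, hc2]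
    simp [bernsteinPolynomial]
    ring
  have hconst := is_const_of_deriv_eq_zero (fun x => (hG x).differentiableAt) (fun x => (hG x).deriv) p 1
  have hG1 : G 1 = 1 := by
    simp only [G, hP, Polynomial.eval_finset_sum, bernsteinPolynomial.eval_at_1]
    rw [Finset.sum_eq_single d]
    · simp
    · intro b _ hb
      rw [if_neg (by omega)]
    · simp
  rw [hG1] at hconst
  simp only [G] at hconst
  linarith


/-- For 1 ≤ m ≤ N and every real p,
Σ_{k=m}^{N} C(N,k)·p^k·(1−p)^{N−k}
  = 1 − m·C(N,m)·Σ_{n=0}^{m−1} C(m−1,n)·(−1)^n·(1−p)^{N−m+n+1}/(N−m+n+1). -/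
theorem order_statistic_binomial_tail_identity (N m : ℕ) (hm : 1 ≤ m) (hmN : m ≤ N)
    (p : ℝ) :
    ∑ k ∈ Finset.Icc m N, (N.choose k : ℝ) * p ^ k * (1 - p) ^ (N - k) =
      1 - (m : ℝ) * (N.choose m : ℝ) *
        ∑ n ∈ Finset.range m, ((m - 1).choose n : ℝ) * (-1 : ℝ) ^ n *
          (1 - p) ^ (N - m + n + 1) / ((N : ℝ) - m + n + 1) := by
  obtain ⟨M, rfl⟩ : ∃ M, m = M + 1 := ⟨m - 1, by omega⟩
  obtain ⟨d, rfl⟩ : ∃ d, N = M + d + 1 := ⟨N - (M + 1), by omega⟩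
  have h := osb_aux M d p
  have e1 : M + d + 1 - (M + 1) = d := by omega
  have e2 : ((M + d + 1 : ℕ) : ℝ) - ((M + 1 : ℕ) : ℝ) = d := by push_cast; ring
  rw [e1, e2, Nat.add_sub_cancel, ← h, Polynomial.eval_finset_sum,
    ← Finset.Ico_add_one_right_eq_Icc, Finset.sum_Ico_eq_sum_range]
  have e3 : M + d + 1 + 1 - (M + 1) = d + 1 := by omega
  rw [e3]
  refine Finset.sum_congr rfl fun k _ => ?_
  have e4 : M + 1 + k = M + k + 1 := by omega
  rw [e4]
  simp [bernsteinPolynomial]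
end
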